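/- arXiv:nlin/0611008 — 2 statements merged into one kernel-verified Lean document; each statement's English description precedes it below -/
import Mathlib

section
/- For every nonnegative integer n, the operator T_1 = Σ_{i=1}^N z_i ∂_i² + 2a Σ_{i=1}^N (z_i − z_{i+1})^{-1}(z_i ∂_i − z_{i+1} ∂_{i+1}) − a Σ_{i=1}^N (z_i + z_{i+1})(z_i − z_{i+1})^{-2}(1 − K_{i,i+1}), acting on Σ-valued polynomials with K_{i,i+1} exchanging the variables z_i and z_{i+1} (and acting trivially on the spin component), leaves invariant the space 𝒯_1^n spanned by all elements of the form f(σ_1,σ_2,τ_N) Λ|s⟩ and g(σ_1,τ_N) Λ(z_1|s⟩), where |s⟩ ranges over Σ, f is a polynomial in σ_1, σ_2, τ_N of degree at most 1 in σ_2 and at most 1 in τ_N with total z-degree at most n, and g is a polynomial in σ_1, τ_N of degree at most 1 in τ_N with total z-degree at most n−1. In particular, for any element Φ of 𝒯_1^n, the a priori rational-function-valued expression T_1 Φ is a Σ-valued polynomial lying in 𝒯_1^n. -/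
noncomputable section

open MvPolynomial

/-- Polynomials in `N` variables over `ℂ`. -/
abbrev MvP (N : ℕ) : Type := MvPolynomial (Fin N) ℂ

/-- The spin space `Σ`: complex functions on `Fin N → Fin d`. -/
abbrev SpinV (N d : ℕ) : Type := (Fin N → Fin d) → ℂ

/-- `Σ`-valued polynomials. -/
abbrev SpinPoly (N d : ℕ) : Type := (Fin N → Fin d) → MvP N

/-- The canonical embedding of polynomials into the field of rational functions. -/
noncomputable def phi (N : ℕ) : MvP N →+* FractionRing (MvP N) :=
  algebraMap (MvP N) (FractionRing (MvP N))

/-- The power sum `σ_k = ∑ i, z_i ^ k`. -/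
def sig (N k : ℕ) : MvP N := ∑ i : Fin N, X i ^ k

/-- The top elementary symmetric polynomial `τ_N = ∏ i, z_i`. -/
def tauTop (N : ℕ) : MvP N := ∏ i : Fin N, X i

/-- The action of a permutation `π ∈ S_N` on the spin space, permuting the `N` spin slots. -/
def spinPerm {N d : ℕ} (π : Equiv.Perm (Fin N)) (v : SpinV N d) : SpinV N d :=
  fun c => v (c ∘ π)

/-- The spin vector `|s_i⟩ = (1/N!) ∑_{π ∈ S_N, π(1) = i} π |s⟩`. -/
noncomputable def sComp {N d : ℕ} [NeZero N] (s : SpinV N d) (i : Fin N) : SpinV N d :=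
  (N.factorial : ℂ)⁻¹ •
    ∑ π ∈ Finset.univ.filter (fun π : Equiv.Perm (Fin N) => π 0 = i), spinPerm π s

/-- The symmetrization `Λ|s⟩ = ∑ i, |s_i⟩`. -/
noncomputable def Lam {N d : ℕ} [NeZero N] (s : SpinV N d) : SpinV N d :=
  ∑ i : Fin N, sComp s i

/-- The operator
`T_1 = ∑ i z_i ∂_i² + 2a ∑ i (z_i - z_{i+1})⁻¹ (z_i ∂_i - z_{i+1} ∂_{i+1})
  - a ∑ i (z_i + z_{i+1}) (z_i - z_{i+1})⁻² (1 - K_{i,i+1})`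
(indices cyclic, `K_{i,i+1}` exchanging the variables `z_i` and `z_{i+1}`),
computed in the field of rational functions; it acts componentwise on `Σ`-valued
polynomials (`K_{i,i+1}` acting trivially on the spin component). -/
noncomputable def T1op (N : ℕ) [NeZero N] (a : ℝ) (f : MvP N) : FractionRing (MvP N) :=
  (∑ i : Fin N, phi N (X i * pderiv i (pderiv i f)))
  + phi N (C ((2 * a : ℝ) : ℂ)) *
      ∑ i : Fin N, (phi N (X i - X (i + 1)))⁻¹ *
        phi N (X i * pderiv i f - X (i + 1) * pderiv (i + 1) f)
  - phi N (C ((a : ℝ) : ℂ)) *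
      ∑ i : Fin N, phi N (X i + X (i + 1)) * ((phi N (X i - X (i + 1)))⁻¹) ^ 2 *
        phi N (f - rename (Equiv.swap i (i + 1)) f)

/-- Generators of type `f(σ_1, σ_2, τ_N) Λ|s⟩`, where `f` has degree at most `1` in `σ_2`
and in `τ_N`, and total `z`-degree at most `n`. -/
def T1genF (N d n : ℕ) [NeZero N] : Set (SpinPoly N d) :=
  {Φ | ∃ (s : SpinV N d) (F : MvPolynomial (Fin 3) ℂ),
    F.degreeOf 1 ≤ 1 ∧ F.degreeOf 2 ≤ 1 ∧
    (aeval ![sig N 1, sig N 2, tauTop N] F : MvP N).totalDegree ≤ n ∧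
    Φ = fun c => C (Lam s c) * aeval ![sig N 1, sig N 2, tauTop N] F}

/-- Generators of type `g(σ_1, τ_N) Λ(z_1 |s⟩)`, where `g` has degree at most `1` in `τ_N`
and total `z`-degree at most `n - 1`. -/
def T1genG (N d n : ℕ) [NeZero N] : Set (SpinPoly N d) :=
  {Φ | ∃ (s : SpinV N d) (G : MvPolynomial (Fin 2) ℂ),
    G.degreeOf 1 ≤ 1 ∧
    (aeval ![sig N 1, tauTop N] G : MvP N).totalDegree + 1 ≤ n ∧
    Φ = fun c => ∑ i : Fin N, C (sComp s i c) * (X i * aeval ![sig N 1, tauTop N] G)}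

/-- The space `𝒯_1^n`. -/
noncomputable def T1space (N d n : ℕ) [NeZero N] : Submodule ℂ (SpinPoly N d) :=
  Submodule.span ℂ (T1genF N d n ∪ T1genG N d n)

lemma fin_ne_succ {N : ℕ} [NeZero N] (hN : 3 ≤ N) (i : Fin N) : i ≠ i + 1 := by
  obtain ⟨M, rfl⟩ : ∃ M, N = M + 2 := ⟨N - 2, by omega⟩
  intro h
  have h2 : (1 : Fin (M + 2)) = 0 := by
    have := h.symm
    simpa using this
  exact absurd h2 (by simp)

lemma phi_inj (N : ℕ) : Function.Injective (phi N) :=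
  IsFractionRing.injective (MvP N) (FractionRing (MvP N))

lemma T1op_add (N : ℕ) [NeZero N] (a : ℝ) (f g : MvP N) :
    T1op N a (f + g) = T1op N a f + T1op N a g := by
  simp only [T1op, map_add, map_sub, map_mul, mul_add, mul_sub, Finset.sum_add_distrib,
    Finset.sum_sub_distrib, mul_sub]
  ring

lemma T1op_C_mul (N : ℕ) [NeZero N] (a : ℝ) (r : ℂ) (f : MvP N) :
    T1op N a (C r * f) = phi N (C r) * T1op N a f := by
  have h1 : ∀ (i : Fin N) (g : MvP N), pderiv i (C r * g) = C r * pderiv i g :=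
    fun i g => pderiv_C_mul
  have hA : ∑ i : Fin N, phi N (X i * pderiv i (pderiv i (C r * f)))
      = phi N (C r) * ∑ i : Fin N, phi N (X i * pderiv i (pderiv i f)) := by
    rw [Finset.mul_sum]
    refine Finset.sum_congr rfl fun i _ => ?_
    rw [h1, h1, ← map_mul (phi N), mul_left_comm]
  have hB : ∑ i : Fin N, (phi N (X i - X (i + 1)))⁻¹ *
        phi N (X i * pderiv i (C r * f) - X (i + 1) * pderiv (i + 1) (C r * f))
      = phi N (C r) * ∑ i : Fin N, (phi N (X i - X (i + 1)))⁻¹ *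
        phi N (X i * pderiv i f - X (i + 1) * pderiv (i + 1) f) := by
    rw [Finset.mul_sum]
    refine Finset.sum_congr rfl fun i _ => ?_
    rw [h1, h1, mul_left_comm (phi N (C r)), ← map_mul (phi N) (C r), mul_sub (C r),
      mul_left_comm (C r), mul_left_comm (C r)]
  have hD : ∑ i : Fin N, phi N (X i + X (i + 1)) * ((phi N (X i - X (i + 1)))⁻¹) ^ 2 *
        phi N (C r * f - rename (Equiv.swap i (i + 1)) (C r * f))
      = phi N (C r) * ∑ i : Fin N, phi N (X i + X (i + 1)) *
        ((phi N (X i - X (i + 1)))⁻¹) ^ 2 *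
        phi N (f - rename (Equiv.swap i (i + 1)) f) := by
    rw [Finset.mul_sum]
    refine Finset.sum_congr rfl fun i _ => ?_
    rw [map_mul (rename (Equiv.swap i (i + 1))), rename_C, ← mul_sub (C r), map_mul (phi N) (C r),
      mul_left_comm]
  unfold T1op
  rw [hA, hB, hD, mul_left_comm (phi N (C ((2 * a : ℝ) : ℂ))),
    mul_left_comm (phi N (C ((a : ℝ) : ℂ))), ← mul_add, ← mul_sub]

/-- Key reduction: polynomiality of the expression pairwise. -/
lemma T1op_eq (N : ℕ) [NeZero N] (hN : 3 ≤ N) (a : ℝ) (f : MvP N) (Q : Fin N → MvP N)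
    (hQ : ∀ i, 2 * (X i - X (i + 1)) * (X i * pderiv i f - X (i + 1) * pderiv (i + 1) f)
      - (X i + X (i + 1)) * (f - rename (Equiv.swap i (i + 1)) f)
      = (X i - X (i + 1)) ^ 2 * Q i) :
    T1op N a f = phi N ((∑ i, X i * pderiv i (pderiv i f)) + C (a : ℂ) * ∑ i, Q i) := by
  unfold T1op
  rw [map_add, map_sum, map_mul, map_sum, add_sub_assoc]
  congr 1
  have h2 : phi N (C ((2 * a : ℝ) : ℂ)) = phi N (C (a : ℂ)) * 2 := by
    push_cast
    rw [mul_comm, C_mul, map_mul]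
    congr 1
    rw [show (C (2 : ℂ) : MvP N) = 2 from map_ofNat C 2]
    exact map_ofNat _ 2
  rw [h2, mul_assoc, ← mul_sub]
  congr 1
  rw [Finset.mul_sum, ← Finset.sum_sub_distrib]
  refine Finset.sum_congr rfl fun i _ => ?_
  have hne : phi N (X i - X (i + 1)) ≠ 0 := by
    rw [Ne, map_eq_zero_iff _ (phi_inj N), sub_eq_zero]
    exact fun h => fin_ne_succ hN i (X_injective h)
  have h := congrArg (phi N) (hQ i)
  rw [map_sub, map_mul, map_mul, map_mul (phi N) (X i + X (i + 1)), map_mul, map_pow,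
    map_ofNat] at h
  generalize phi N (X i - X (i + 1)) = D at *
  field_simp
  linear_combination h

lemma pd_sig1 (N : ℕ) (i : Fin N) : pderiv i (sig N 1) = 1 := by
  simp [sig, pderiv_X, Pi.single_apply, eq_comm]

lemma pd_sig2 (N : ℕ) (i : Fin N) : pderiv i (sig N 2) = 2 * X i := by
  simp [sig, pderiv_X, Pi.single_apply, eq_comm, pderiv_pow]

/-- The product of all variables but one. -/
def tauHat (N : ℕ) (i : Fin N) : MvP N := ∏ j ∈ Finset.univ.erase i, X j

lemma X_mul_tauHat (N : ℕ) (i : Fin N) : X i * tauHat N i = tauTop N :=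
  Finset.mul_prod_erase _ _ (Finset.mem_univ i)

lemma pd_tauHat (N : ℕ) (i : Fin N) : pderiv i (tauHat N i) = 0 := by
  apply pderiv_eq_zero_of_notMem_vars
  intro h
  have := vars_prod (fun j => (X j : MvP N)) h
  simp at this

lemma pd_tau (N : ℕ) (i : Fin N) : pderiv i (tauTop N) = tauHat N i := by
  rw [← X_mul_tauHat N i, pderiv_mul, pd_tauHat]
  simp

lemma rename_sig (N k : ℕ) (e : Equiv.Perm (Fin N)) : rename e (sig N k) = sig N k := by
  simp only [sig, map_sum, map_pow, rename_X]
  exact Equiv.sum_comp e (fun j => (X j : MvP N) ^ k)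

lemma rename_tau (N : ℕ) (e : Equiv.Perm (Fin N)) : rename e (tauTop N) = tauTop N := by
  simp only [tauTop, map_prod, rename_X]
  exact Equiv.prod_comp e (fun j => (X j : MvP N))

/-- The linear form with coefficients `v`. -/
def ell (N : ℕ) (v : Fin N → ℂ) : MvP N := ∑ j, C (v j) * X j

lemma pd_ell (N : ℕ) (v : Fin N → ℂ) (i : Fin N) : pderiv i (ell N v) = C (v i) := by
  simp [ell, pderiv_X, Pi.single_apply, eq_comm]

lemma ell_sub (N : ℕ) (v : Fin N → ℂ) (i k : Fin N) (h : i ≠ k) :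
    ell N v - rename (Equiv.swap i k) (ell N v) = C (v i - v k) * (X i - X k) := by
  simp only [ell, map_sum, map_mul, rename_C, rename_X, ← Finset.sum_sub_distrib]
  rw [Finset.sum_eq_add i k h]
  · simp
    ring
  · intro c _ hc
    rw [Equiv.swap_apply_of_ne_of_ne hc.1 hc.2]
    ring
  · simp
  · simp

lemma sum_X (N : ℕ) : ∑ i, (X i : MvP N) = sig N 1 := by simp [sig]
lemma sum_X2 (N : ℕ) : ∑ i, (X i : MvP N) ^ 2 = sig N 2 := by simp [sig]

/-- monomial in the symmetric functions. -/
def mon (N p q r : ℕ) : MvP N := sig N 1 ^ p * sig N 2 ^ q * tauTop N ^ r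

/-- first derivative of the power of `σ_1`. -/
def P1 (N p : ℕ) : MvP N := (p : MvP N) * sig N 1 ^ (p - 1)
/-- second derivative of the power of `σ_1`. -/
def P2 (N p : ℕ) : MvP N := (p : MvP N) * ((p - 1 : ℕ) : MvP N) * sig N 1 ^ (p - 1 - 1)

lemma pd_P (N p : ℕ) (i : Fin N) : pderiv i (sig N 1 ^ p) = P1 N p := by
  rw [pderiv_pow, pd_sig1, P1]; ring

lemma pd_P1 (N p : ℕ) (i : Fin N) : pderiv i (P1 N p) = P2 N p := by
  have : pderiv i ((p : MvP N)) = 0 := by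
    rw [show (p : MvP N) = C (p : ℂ) by simp]; exact pderiv_C
  rw [P1, pderiv_mul, this, pderiv_pow, pd_sig1, P2]; ring

lemma sig_P2 (N p : ℕ) : sig N 1 * P2 N p = ((p - 1 : ℕ) : MvP N) * P1 N p := by
  rcases p with _ | _ | p
  · simp [P1, P2]
  · simp [P1, P2]
  · simp [P1, P2]; ring

lemma card_sum (N : ℕ) (f : MvP N) : ∑ _i : Fin N, f = (N : MvP N) * f := by simp

lemma pd2 (N : ℕ) (i : Fin N) : pderiv i (2 : MvP N) = 0 := by
  rw [show (2 : MvP N) = C (2 : ℂ) from (map_ofNat C 2).symm]; exact pderiv_C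

lemma T1_mon (N : ℕ) [NeZero N] (hN : 3 ≤ N) (a : ℝ) (p q r : ℕ) (hq : q ≤ 1) (hr : r ≤ 1) :
    T1op N a (mon N p q r) =
      phi N (C (((p * (p - 1 : ℕ) + 4 * p * q + 2 * N * p * r : ℕ) : ℂ) + 2 * a * N * p)
          * mon N (p - 1) q r
        + C (((2 * q + 4 * q * r : ℕ) : ℂ) + 8 * a * q) * mon N (p + 1) 0 r) := by
  have hs2 := sig_P2 N p
  have hren : ∀ e : Equiv.Perm (Fin N), rename e (mon N p q r) = mon N p q r := by
    intro e; simp only [mon, map_mul, map_pow, rename_sig, rename_tau]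
  rw [T1op_eq N hN a _ (fun i => 2 * P1 N p * sig N 2 ^ q * tauTop N ^ r
    + 4 * (q : MvP N) * (X i + X (i + 1)) * sig N 1 ^ p * tauTop N ^ r)]
  · congr 1
    have hsum : ∑ i : Fin N, (X (i + 1) : MvP N) = sig N 1 := by
      rw [← sum_X]; exact Equiv.sum_comp (Equiv.addRight 1) (fun j => (X j : MvP N))
    have hsum2 : ∑ i : Fin N, (2 * P1 N p * sig N 2 ^ q * tauTop N ^ r
      + 4 * (q : MvP N) * (X i + X (i + 1)) * sig N 1 ^ p * tauTop N ^ r)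
      = N * (2 * P1 N p * sig N 2 ^ q * tauTop N ^ r)
        + 8 * q * sig N 1 ^ (p + 1) * tauTop N ^ r := by
      rw [Finset.sum_add_distrib, card_sum, ← Finset.sum_mul, ← Finset.sum_mul,
        ← Finset.mul_sum, Finset.sum_add_distrib, hsum, sum_X]
      ring
    rw [hsum2]
    have hd : ∀ i : Fin N, X i * pderiv i (pderiv i (mon N p q r)) =
        X i * (P2 N p * sig N 2 ^ q * tauTop N ^ r
          + 2 * (q : MvP N) * sig N 1 ^ p * tauTop N ^ r + 4 * (q : MvP N) * (r : MvP N) * tauTop N * sig N 1 ^ p)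
        + 4 * (q : MvP N) * X i ^ 2 * P1 N p * tauTop N ^ r
        + 2 * (r : MvP N) * tauTop N * P1 N p * sig N 2 ^ q := by
      intro i
      have ht := X_mul_tauHat N i
      interval_cases q <;> interval_cases r <;>
      simp only [mon, pderiv_mul, pd_P, pd_P1, pd_sig2, pd_tau, pd_tauHat, pow_zero, pow_one,
        map_add, map_zero, pderiv_one, pderiv_X_self, pd2, Nat.cast_zero, Nat.cast_one,
        mul_one, mul_zero, zero_mul, add_zero, zero_add, one_mul] <;> (try rw [← ht]) <;> ring
    rw [Finset.sum_congr rfl (fun i _ => hd i), Finset.sum_add_distrib, Finset.sum_add_distrib,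
      ← Finset.sum_mul, card_sum, ← Finset.sum_mul, ← Finset.sum_mul, ← Finset.mul_sum,
      sum_X, sum_X2]
    have hC : ∀ m : ℕ, (C (m : ℂ) : MvP N) = (m : MvP N) := fun m => by simp
    simp only [C_add, C_mul, hC, Nat.cast_add, Nat.cast_mul, Nat.cast_ofNat, map_ofNat]
    rw [show ∀ T U : MvP N, sig N 1 * (P2 N p * sig N 2 ^ q * tauTop N ^ r + T + U)
      = ((p - 1 : ℕ) : MvP N) * P1 N p * sig N 2 ^ q * tauTop N ^ r + sig N 1 * (T + U) from
      fun T U => by linear_combination sig N 2 ^ q * tauTop N ^ r * hs2] 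
    interval_cases q <;> interval_cases r <;> simp only [mon, P1] <;> push_cast <;> ring
  · intro i
    rw [hren]
    have hd : ∀ i : Fin N, X i * pderiv i (mon N p q r) =
        X i * P1 N p * sig N 2 ^ q * tauTop N ^ r
          + 2 * (q : MvP N) * X i ^ 2 * sig N 1 ^ p * tauTop N ^ r
          + (r : MvP N) * tauTop N * sig N 1 ^ p * sig N 2 ^ q := by
      intro i
      have ht := X_mul_tauHat N i
      interval_cases q <;> interval_cases r <;>
      simp only [mon, pderiv_mul, pd_P, pd_P1, pd_sig2, pd_tau, pd_tauHat, pow_zero, pow_one,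
        map_add, map_zero, pderiv_one, pderiv_X_self, pd2, Nat.cast_zero, Nat.cast_one,
        mul_one, mul_zero, zero_mul, add_zero, zero_add, one_mul] <;> (try rw [← ht]) <;> ring
    rw [hd, hd]
    ring

lemma T1_ell (N : ℕ) [NeZero N] (hN : 3 ≤ N) (a : ℝ) (p r : ℕ) (hr : r ≤ 1)
    (v : Fin N → ℂ) :
    T1op N a (ell N v * mon N p 0 r) =
      phi N (C (((p * (p - 1 : ℕ) + 2 * p + 2 * N * p * r : ℕ) : ℂ) + 2 * a * N * p)
          * (ell N v * mon N (p - 1) 0 r)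
        + C ((2 * r : ℕ) + 2 * a : ℂ) * (C (∑ i, v i) * mon N p 0 r)) := by
  have hs2 := sig_P2 N p
  have hren : ∀ e : Equiv.Perm (Fin N), rename e (mon N p 0 r) = mon N p 0 r := by
    intro e; simp only [mon, map_mul, map_pow, rename_sig, rename_tau]
  rw [T1op_eq N hN a _ (fun i => 2 * P1 N p * tauTop N ^ r * ell N v
    + mon N p 0 r * (C (v i) + C (v (i + 1))))]
  · congr 1
    have hsum0 : ∑ i : Fin N, (C (v i) : MvP N) = C (∑ i, v i) := by
      rw [map_sum]
    have hsum : ∑ i : Fin N, (C (v (i + 1)) : MvP N) = C (∑ i, v i) := by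
      rw [← hsum0]; exact Equiv.sum_comp (Equiv.addRight 1) (fun j => (C (v j) : MvP N))
    rw [Finset.sum_add_distrib, card_sum, ← Finset.mul_sum, Finset.sum_add_distrib, hsum, hsum0]
    have hd : ∀ i : Fin N, X i * pderiv i (pderiv i (ell N v * mon N p 0 r)) =
        X i * (P2 N p * tauTop N ^ r * ell N v)
        + 2 * (r : MvP N) * tauTop N * P1 N p * ell N v
        + C (v i) * X i * (2 * P1 N p * tauTop N ^ r)
        + C (v i) * (2 * (r : MvP N) * tauTop N * sig N 1 ^ p) := by
      intro i
      have ht := X_mul_tauHat N i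
      interval_cases r <;>
      simp only [mon, pderiv_mul, pd_P, pd_P1, pd_tau, pd_tauHat, pow_zero, pow_one, pd_ell,
        pderiv_C,
        map_add, map_zero, pderiv_one, pderiv_X_self, pd2, Nat.cast_zero, Nat.cast_one,
        mul_one, mul_zero, zero_mul, add_zero, zero_add, one_mul] <;> (try rw [← ht]) <;> ring
    rw [Finset.sum_congr rfl (fun i _ => hd i), Finset.sum_add_distrib, Finset.sum_add_distrib,
      Finset.sum_add_distrib,
      ← Finset.sum_mul, card_sum, ← Finset.sum_mul, ← Finset.sum_mul, sum_X, hsum0,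
      show ∑ i, C (v i) * X i = ell N v from rfl]
    have hC : ∀ m : ℕ, (C (m : ℂ) : MvP N) = (m : MvP N) := fun m => by simp
    simp only [C_add, C_mul, hC, Nat.cast_add, Nat.cast_mul, Nat.cast_ofNat, map_ofNat]
    rw [show sig N 1 * (P2 N p * tauTop N ^ r * ell N v)
      = ((p - 1 : ℕ) : MvP N) * P1 N p * tauTop N ^ r * ell N v from
      by linear_combination tauTop N ^ r * ell N v * hs2] 
    interval_cases r <;> simp only [mon, P1] <;> push_cast <;> ring
  · intro i
    have he := ell_sub N v i (i + 1) (fin_ne_succ hN i)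
    rw [map_mul (rename (Equiv.swap i (i + 1))), hren, ← sub_mul, he]
    have hd : ∀ i : Fin N, X i * pderiv i (ell N v * mon N p 0 r) =
        X i * P1 N p * tauTop N ^ r * ell N v
          + (r : MvP N) * tauTop N * sig N 1 ^ p * ell N v + C (v i) * X i * mon N p 0 r := by
      intro i
      have ht := X_mul_tauHat N i
      interval_cases r <;>
      simp only [mon, pderiv_mul, pd_P, pd_tau, pow_zero, pow_one, pd_ell,
        pderiv_one, Nat.cast_zero, Nat.cast_one,
        mul_one, mul_zero, zero_mul, add_zero, zero_add, one_mul] <;> (try rw [← ht]) <;> ring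
    rw [hd, hd, C_sub]
    ring

lemma mon_homog (N p q r : ℕ) : (mon N p q r).IsHomogeneous (p + 2 * q + N * r) := by
  have hs : ∀ k, (sig N k).IsHomogeneous k := fun k =>
    IsHomogeneous.sum _ _ _ fun i _ => by simpa using (isHomogeneous_X ℂ i).pow k
  have ht : (tauTop N).IsHomogeneous N := by
    have := IsHomogeneous.prod Finset.univ (fun i : Fin N => (X i : MvP N)) (fun _ => 1)
      (fun i _ => isHomogeneous_X ℂ i)
    simpa [tauTop] using this
  have := (((hs 1).pow p).mul ((hs 2).pow q)).mul (ht.pow r)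
  simpa [mon] using this

/-- Generic truncation: a polynomial expression of small total degree in homogeneous monomials
is in the span of the monomials of small degree. -/
lemma trunc_mem {N n : ℕ} {ι : Type*} (s : Finset ι) (co : ι → ℂ) (m : ι → MvP N) (w : ι → ℕ)
    (hm : ∀ i ∈ s, (m i).IsHomogeneous (w i)) (S : Submodule ℂ (MvP N))
    (hS : ∀ i ∈ s, w i ≤ n → m i ∈ S)
    (h : (∑ i ∈ s, co i • m i).totalDegree ≤ n) : ∑ i ∈ s, co i • m i ∈ S := by
  rw [← sum_homogeneousComponent (∑ i ∈ s, co i • m i)]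
  refine Submodule.sum_mem _ fun k hk => ?_
  have hk' : k ≤ n := by
    have := Finset.mem_range.1 hk
    omega
  rw [map_sum]
  refine Submodule.sum_mem _ fun i hi => ?_
  rw [map_smul]
  refine Submodule.smul_mem _ _ ?_
  rw [homogeneousComponent_of_mem (hm i hi)]
  split_ifs with hw
  · exact hS i hi (by omega)
  · exact Submodule.zero_mem _

/-- The space of scalar functions for `F`. -/
def SF (N n : ℕ) : Submodule ℂ (MvP N) :=
  Submodule.span ℂ {f | ∃ p q r, q ≤ 1 ∧ r ≤ 1 ∧ p + 2 * q + N * r ≤ n ∧ f = mon N p q r}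

/-- The space of scalar functions for `G`. -/
def SG (N n : ℕ) : Submodule ℂ (MvP N) :=
  Submodule.span ℂ {f | ∃ p r, r ≤ 1 ∧ p + N * r + 1 ≤ n ∧ f = mon N p 0 r}

lemma memSF (N n : ℕ) (F : MvPolynomial (Fin 3) ℂ) (h1 : F.degreeOf 1 ≤ 1)
    (h2 : F.degreeOf 2 ≤ 1)
    (h : (aeval ![sig N 1, sig N 2, tauTop N] F : MvP N).totalDegree ≤ n) :
    aeval ![sig N 1, sig N 2, tauTop N] F ∈ SF N n := by
  have e : (aeval ![sig N 1, sig N 2, tauTop N] F : MvP N)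
      = ∑ m ∈ F.support, F.coeff m • mon N (m 0) (m 1) (m 2) := by
    rw [aeval_def, eval₂_eq']
    refine Finset.sum_congr rfl fun m _ => ?_
    rw [Fin.prod_univ_three, Algebra.smul_def]
    rfl
  rw [e] at h
  rw [e]
  refine trunc_mem F.support (fun m => F.coeff m) (fun m => mon N (m 0) (m 1) (m 2))
    (fun m => m 0 + 2 * m 1 + N * m 2) (fun m _ => mon_homog N (m 0) (m 1) (m 2)) (SF N n)
    ?_ h
  intro m hm hw
  have k1 := (monomial_le_degreeOf 1 hm).trans h1
  have k2 := (monomial_le_degreeOf 2 hm).trans h2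
  exact Submodule.subset_span ⟨m 0, m 1, m 2, k1, k2, hw, rfl⟩

lemma memSG (N n : ℕ) (F : MvPolynomial (Fin 2) ℂ) (h1 : F.degreeOf 1 ≤ 1)
    (h : (aeval ![sig N 1, tauTop N] F : MvP N).totalDegree + 1 ≤ n) :
    aeval ![sig N 1, tauTop N] F ∈ SG N n := by
  have e : (aeval ![sig N 1, tauTop N] F : MvP N)
      = ∑ m ∈ F.support, F.coeff m • mon N (m 0) 0 (m 1) := by
    rw [aeval_def, eval₂_eq']
    refine Finset.sum_congr rfl fun m _ => ?_
    rw [Fin.prod_univ_two, Algebra.smul_def]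
    simp [mon]
  have h' : (aeval ![sig N 1, tauTop N] F : MvP N).totalDegree ≤ n - 1 := by omega
  rw [e] at h'
  rw [e]
  refine trunc_mem F.support (fun m => F.coeff m) (fun m => mon N (m 0) 0 (m 1))
    (fun m => m 0 + 2 * 0 + N * m 1) (fun m _ => mon_homog N (m 0) 0 (m 1)) (SG N n)
    ?_ h'
  intro m hm hw
  have k1 := (monomial_le_degreeOf 1 hm).trans h1
  have k2 : m 0 + N * m 1 + 1 ≤ n := by
    have : m 0 + 2 * 0 + N * m 1 ≤ n - 1 := hw
    omega
  exact Submodule.subset_span ⟨m 0, m 1, k1, k2, rfl⟩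

lemma deg_aux {σ : Type*} [DecidableEq σ] (m : σ →₀ ℕ) (i : σ) :
    (monomial m (1 : ℂ)).degreeOf i ≤ m i := by
  rw [degreeOf_monomial_eq _ _ one_ne_zero]

lemma monF_mem (N d n : ℕ) [NeZero N] (s : SpinV N d) (p q r : ℕ) (hq : q ≤ 1) (hr : r ≤ 1)
    (hw : p + 2 * q + N * r ≤ n) :
    (fun c => C (Lam s c) * mon N p q r : SpinPoly N d) ∈ T1space N d n := by
  refine Submodule.subset_span (Or.inl
    ⟨s, monomial (Finsupp.equivFunOnFinite.symm ![p, q, r]) 1, ?_, ?_, ?_, ?_⟩)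
  · exact (deg_aux _ _).trans (by simpa using hq)
  · exact (deg_aux _ _).trans (by simpa using hr)
  all_goals
    have e : (aeval ![sig N 1, sig N 2, tauTop N]
        (monomial (Finsupp.equivFunOnFinite.symm ![p, q, r]) (1 : ℂ)) : MvP N)
        = mon N p q r := by
      rw [aeval_monomial, Finsupp.prod_fintype _ _ (by simp), Fin.prod_univ_three]
      simp [mon]
    rw [e]
  exact (mon_homog N p q r).totalDegree_le.trans hw

lemma monG_mem (N d n : ℕ) [NeZero N] (s : SpinV N d) (p r : ℕ) (hr : r ≤ 1)
    (hw : p + N * r + 1 ≤ n) :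
    (fun c => ell N (fun i => sComp s i c) * mon N p 0 r : SpinPoly N d) ∈ T1space N d n := by
  refine Submodule.subset_span (Or.inr
    ⟨s, monomial (Finsupp.equivFunOnFinite.symm ![p, r]) 1, ?_, ?_, ?_⟩)
  · exact (deg_aux _ _).trans (by simpa using hr)
  all_goals
    have e : (aeval ![sig N 1, tauTop N]
        (monomial (Finsupp.equivFunOnFinite.symm ![p, r]) (1 : ℂ)) : MvP N)
        = mon N p 0 r := by
      rw [aeval_monomial, Finsupp.prod_fintype _ _ (by simp), Fin.prod_univ_two]
      simp [mon]
    rw [e]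
  · have := (mon_homog N p 0 r).totalDegree_le
    omega
  · funext c
    simp only [ell, Finset.sum_mul, mul_assoc]

/-- `Good Φ`: the image of `Φ` is polynomial and lies in the space. -/
def Good (N d n : ℕ) [NeZero N] (a : ℝ) (Φ : SpinPoly N d) : Prop :=
  ∃ Φ' ∈ T1space N d n, ∀ c : Fin N → Fin d, phi N (Φ' c) = T1op N a (Φ c)

lemma good_zero (N d n : ℕ) [NeZero N] (a : ℝ) : Good N d n a 0 := by
  refine ⟨0, Submodule.zero_mem _, fun c => ?_⟩
  have := T1op_C_mul N a 0 0
  simpa using this.symm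

lemma good_add (N d n : ℕ) [NeZero N] (a : ℝ) (x y : SpinPoly N d) (hx : Good N d n a x)
    (hy : Good N d n a y) : Good N d n a (x + y) := by
  obtain ⟨x', hx', hx⟩ := hx
  obtain ⟨y', hy', hy⟩ := hy
  refine ⟨x' + y', Submodule.add_mem _ hx' hy', fun c => ?_⟩
  rw [Pi.add_apply, Pi.add_apply, T1op_add, map_add, hx, hy]

lemma good_smul (N d n : ℕ) [NeZero N] (a : ℝ) (r : ℂ) (x : SpinPoly N d)
    (hx : Good N d n a x) : Good N d n a (r • x) := by
  obtain ⟨x', hx', hx⟩ := hx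
  refine ⟨r • x', Submodule.smul_mem _ _ hx', fun c => ?_⟩
  rw [Pi.smul_apply, Pi.smul_apply, smul_eq_C_mul, smul_eq_C_mul, T1op_C_mul, map_mul, hx]

/-- Good elements form a submodule. -/
def GoodS (N d n : ℕ) [NeZero N] (a : ℝ) : Submodule ℂ (SpinPoly N d) where
  carrier := {Φ | Good N d n a Φ}
  zero_mem' := good_zero N d n a
  add_mem' := fun hx hy => good_add N d n a _ _ hx hy
  smul_mem' := fun r x hx => good_smul N d n a r x hx

/-- Multiplication of a fixed spin polynomial by scalar functions. -/
def mulL (N d : ℕ) (Ψ : SpinPoly N d) : MvP N →ₗ[ℂ] SpinPoly N d where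
  toFun f := fun c => Ψ c * f
  map_add' f g := by funext c; simp [mul_add]
  map_smul' r f := by funext c; simp

lemma goodF_mon (N d n : ℕ) [NeZero N] (hN : 3 ≤ N) (a : ℝ) (s : SpinV N d) (p q r : ℕ)
    (hq : q ≤ 1) (hr : r ≤ 1) (hw : p + 2 * q + N * r ≤ n) :
    Good N d n a (fun c => C (Lam s c) * mon N p q r) := by
  obtain ⟨k1, hk1⟩ : ∃ k : ℂ,
    k = ((p * (p - 1 : ℕ) + 4 * p * q + 2 * N * p * r : ℕ) : ℂ) + 2 * a * N * p := ⟨_, rfl⟩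
  obtain ⟨k2, hk2⟩ : ∃ k : ℂ,
    k = ((2 * q + 4 * q * r : ℕ) : ℂ) + 8 * a * q := ⟨_, rfl⟩
  have hT := T1_mon N hN a p q r hq hr
  rw [← hk1, ← hk2] at hT
  have hm1 := monF_mem N d n s (p - 1) q r hq hr (by omega)
  have hm2 : k2 • (fun c => C (Lam s c) * mon N (p + 1) 0 r : SpinPoly N d)
      ∈ T1space N d n := by
    rcases Nat.eq_zero_or_pos q with h0 | h0
    · have hz : k2 = 0 := by
        rw [hk2, h0]
        simp
      rw [hz, zero_smul]
      exact Submodule.zero_mem _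
    · exact Submodule.smul_mem _ _ (monF_mem N d n s (p + 1) 0 r (by omega) hr (by omega))
  refine ⟨k1 • (fun c => C (Lam s c) * mon N (p - 1) q r : SpinPoly N d)
      + k2 • (fun c => C (Lam s c) * mon N (p + 1) 0 r : SpinPoly N d),
      Submodule.add_mem _ (Submodule.smul_mem _ k1 hm1) hm2, fun c => ?_⟩
  rw [T1op_C_mul, hT, ← map_mul (phi N)]
  refine congrArg (phi N) ?_
  rw [Pi.add_apply, Pi.smul_apply, Pi.smul_apply, smul_eq_C_mul, smul_eq_C_mul,
    mul_add, mul_left_comm (C k1), mul_left_comm (C k2)]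

lemma goodF (N d n : ℕ) [NeZero N] (hN : 3 ≤ N) (a : ℝ) (s : SpinV N d) (f : MvP N)
    (hf : f ∈ SF N n) : mulL N d (fun c => C (Lam s c)) f ∈ GoodS N d n a := by
  have : SF N n ≤ (GoodS N d n a).comap (mulL N d (fun c => C (Lam s c))) := by
    refine Submodule.span_le.2 ?_
    rintro _ ⟨p, q, r, hq, hr, hw, rfl⟩
    exact goodF_mon N d n hN a s p q r hq hr hw
  exact this hf

lemma goodG (N d n : ℕ) [NeZero N] (hN : 3 ≤ N) (a : ℝ) (s : SpinV N d) (f : MvP N)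
    (hf : f ∈ SG N n) :
    mulL N d (fun c => ell N (fun i => sComp s i c)) f ∈ GoodS N d n a := by
  have : SG N n ≤ (GoodS N d n a).comap (mulL N d (fun c => ell N (fun i => sComp s i c))) := by
    refine Submodule.span_le.2 ?_
    rintro _ ⟨p, r, hr, hw, rfl⟩
    have hT := fun v => T1_ell N hN a p r hr v
    refine ⟨(((p * (p - 1 : ℕ) + 2 * p + 2 * N * p * r : ℕ) : ℂ) + 2 * a * N * p) •
        (fun c => ell N (fun i => sComp s i c) * mon N (p - 1) 0 r : SpinPoly N d)
      + ((2 * r : ℕ) + 2 * a : ℂ) • (fun c => C (Lam s c) * mon N p 0 r : SpinPoly N d),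
      ?_, fun c => ?_⟩
    · exact Submodule.add_mem _ (Submodule.smul_mem _ _ (monG_mem N d n s _ _ hr (by omega)))
        (Submodule.smul_mem _ _ (monF_mem N d n s _ _ _ (by omega) hr (by omega)))
    · change _ = T1op N a (ell N (fun i => sComp s i c) * mon N p 0 r)
      rw [hT]
      congr 1
      have hL : Lam s c = ∑ i, sComp s i c := by simp [Lam]
      simp only [Pi.add_apply, Pi.smul_apply, smul_eq_C_mul, hL]
  exact this hf

theorem stmt_6 (N d : ℕ) [NeZero N] (hN : 3 ≤ N) (hd : 1 ≤ d) (a : ℝ) (n : ℕ)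
    (Φ : SpinPoly N d) (hΦ : Φ ∈ T1space N d n) :
    ∃ Φ' ∈ T1space N d n, ∀ c : Fin N → Fin d, phi N (Φ' c) = T1op N a (Φ c) := by
  have h : T1space N d n ≤ GoodS N d n a := by
    refine Submodule.span_le.2 ?_
    rintro Φ (⟨s, F, h1, h2, h3, rfl⟩ | ⟨s, G, h1, h2, rfl⟩)
    · exact goodF N d n hN a s _ (memSF N n F h1 h2 h3)
    · have := goodG N d n hN a s _ (memSG N n G h1 h2)
      have e : (fun c => ∑ i : Fin N, C (sComp s i c) * (X i * aeval ![sig N 1, tauTop N] G)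
          : SpinPoly N d) = mulL N d (fun c => ell N (fun i => sComp s i c))
            (aeval ![sig N 1, tauTop N] G) := by
        funext c
        change _ = ell N (fun i => sComp s i c) * _
        simp only [ell, Finset.sum_mul, mul_assoc]
      rw [e]
      exact this
  exact h hΦ
end
end

section
/- For every nonnegative integer n, the operator T_2 = Σ_{i=1}^N z_i² ∂_i² + 2a Σ_{i=1}^N (z_i − z_{i+1})^{-1}(z_i² ∂_i − z_{i+1}² ∂_{i+1}) − 2a Σ_{i=1}^N z_i z_{i+1} (z_i − z_{i+1})^{-2}(1 − K_{i,i+1}), acting on Σ-valued polynomials with K_{i,i+1} exchanging the variables z_i and z_{i+1} (and acting trivially on the spin component), leaves invariant the space 𝒯_2^n spanned by all elements of the form f(σ_1,τ_{N−1},τ_N) Λ|s⟩, g(τ_{N−1},τ_N) Λ(z_1|s⟩), and q(σ_1,τ_N) Λ(z_2 z_3⋯z_N |s⟩), where |s⟩ ranges over Σ, f is a polynomial in σ_1, τ_{N−1}, τ_N of degree at most 1 in σ_1 and at most 1 in τ_{N−1} with total z-degree at most n, g is a polynomial in τ_{N−1}, τ_N of degree at most 1 in τ_{N−1} with total z-degree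 at most n−1, and q is a polynomial in σ_1, τ_N of degree at most 1 in σ_1 with total z-degree at most n−N+1. In particular, for any element Φ of 𝒯_2^n, the a priori rational-function-valued expression T_2 Φ is a Σ-valued polynomial lying in 𝒯_2^n. -/
noncomputable section

open MvPolynomial

/-- The elementary symmetric polynomial `τ_{N-1} = ∑ i, ∏_{j ≠ i} z_j`. -/
def tauSub (N : ℕ) : MvP N := ∑ i : Fin N, ∏ j ∈ Finset.univ.erase i, X j

/-- The operator
`T_2 = ∑ i z_i² ∂_i² + 2a ∑ i (z_i - z_{i+1})⁻¹ (z_i² ∂_i - z_{i+1}² ∂_{i+1})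
  - 2a ∑ i z_i z_{i+1} (z_i - z_{i+1})⁻² (1 - K_{i,i+1})`
(indices cyclic, `K_{i,i+1}` exchanging the variables `z_i` and `z_{i+1}`),
computed in the field of rational functions; it acts componentwise on `Σ`-valued
polynomials (`K_{i,i+1}` acting trivially on the spin component). -/
noncomputable def T2op (N : ℕ) [NeZero N] (a : ℝ) (f : MvP N) : FractionRing (MvP N) :=
  (∑ i : Fin N, phi N (X i ^ 2 * pderiv i (pderiv i f)))
  + phi N (C ((2 * a : ℝ) : ℂ)) *
      ∑ i : Fin N, (phi N (X i - X (i + 1)))⁻¹ *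
        phi N (X i ^ 2 * pderiv i f - X (i + 1) ^ 2 * pderiv (i + 1) f)
  - phi N (C ((2 * a : ℝ) : ℂ)) *
      ∑ i : Fin N, phi N (X i * X (i + 1)) * ((phi N (X i - X (i + 1)))⁻¹) ^ 2 *
        phi N (f - rename (Equiv.swap i (i + 1)) f)

/-- Generators of type `f(σ_1, τ_{N-1}, τ_N) Λ|s⟩`, where `f` has degree at most `1` in `σ_1`
and in `τ_{N-1}`, and total `z`-degree at most `n`. -/
def T2genF (N d n : ℕ) [NeZero N] : Set (SpinPoly N d) :=
  {Φ | ∃ (s : SpinV N d) (F : MvPolynomial (Fin 3) ℂ),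
    F.degreeOf 0 ≤ 1 ∧ F.degreeOf 1 ≤ 1 ∧
    (aeval ![sig N 1, tauSub N, tauTop N] F : MvP N).totalDegree ≤ n ∧
    Φ = fun c => C (Lam s c) * aeval ![sig N 1, tauSub N, tauTop N] F}

/-- Generators of type `g(τ_{N-1}, τ_N) Λ(z_1 |s⟩)`, where `g` has degree at most `1` in
`τ_{N-1}` and total `z`-degree at most `n - 1`. -/
def T2genG (N d n : ℕ) [NeZero N] : Set (SpinPoly N d) :=
  {Φ | ∃ (s : SpinV N d) (G : MvPolynomial (Fin 2) ℂ),
    G.degreeOf 0 ≤ 1 ∧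
    (aeval ![tauSub N, tauTop N] G : MvP N).totalDegree + 1 ≤ n ∧
    Φ = fun c => ∑ i : Fin N, C (sComp s i c) * (X i * aeval ![tauSub N, tauTop N] G)}

/-- Generators of type `q(σ_1, τ_N) Λ(z_2 ⋯ z_N |s⟩)`, where `q` has degree at most `1` in
`σ_1` and total `z`-degree at most `n - N + 1`. -/
def T2genQ (N d n : ℕ) [NeZero N] : Set (SpinPoly N d) :=
  {Φ | ∃ (s : SpinV N d) (Q : MvPolynomial (Fin 2) ℂ),
    Q.degreeOf 0 ≤ 1 ∧
    (aeval ![sig N 1, tauTop N] Q : MvP N).totalDegree + (N - 1) ≤ n ∧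
    Φ = fun c => ∑ i : Fin N,
      C (sComp s i c) * ((∏ j ∈ Finset.univ.erase i, X j) * aeval ![sig N 1, tauTop N] Q)}

/-- The space `𝒯_2^n`. -/
noncomputable def T2space (N d n : ℕ) [NeZero N] : Submodule ℂ (SpinPoly N d) :=
  Submodule.span ℂ (T2genF N d n ∪ T2genG N d n ∪ T2genQ N d n)

namespace T2Aux

/-- product of all variables but one -/
def w {N : ℕ} (j : Fin N) : MvP N := ∏ i ∈ Finset.univ.erase j, X i

lemma X_mul_w {N : ℕ} (j : Fin N) : X j * w j = tauTop N := by
  unfold w tauTop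
  exact Finset.mul_prod_erase _ _ (Finset.mem_univ j)

lemma tauSub_eq (N : ℕ) : tauSub N = ∑ j : Fin N, w j := rfl

lemma pd_prod {N : ℕ} (i : Fin N) (S : Finset (Fin N)) :
    X i * pderiv i (∏ j ∈ S, X j : MvP N) = if i ∈ S then ∏ j ∈ S, X j else 0 := by
  classical
  induction S using Finset.induction_on with
  | empty => simp
  | insert b S hb ih =>
    rw [Finset.prod_insert hb, pderiv_mul, pderiv_X]
    by_cases h : i = b
    · subst h
      rw [if_neg hb] at ih
      simp only [Pi.single_eq_same, Finset.mem_insert, true_or, if_true]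
      linear_combination X i * ih
    · have : (Pi.single i (1 : MvP N) : Fin N → MvP N) b = 0 := by
        rw [Pi.single_eq_of_ne]; exact fun h' => h h'.symm
      rw [this]
      simp only [Finset.mem_insert, h, false_or]
      split_ifs at ih ⊢ <;> linear_combination X b * ih

lemma pd_w {N : ℕ} (i j : Fin N) : X i * pderiv i (w j) = if i = j then 0 else w j := by
  unfold w
  rw [pd_prod]
  by_cases h : i = j <;> simp [h]

lemma pd_t {N : ℕ} (i : Fin N) : X i * pderiv i (tauTop N) = tauTop N := by
  unfold tauTop
  rw [pd_prod]; simp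

lemma pd_u {N : ℕ} (i : Fin N) : X i * pderiv i (tauSub N) = tauSub N - w i := by
  rw [tauSub_eq, map_sum, Finset.mul_sum]
  simp only [pd_w]
  rw [← Finset.add_sum_erase _ _ (Finset.mem_univ i),
    ← Finset.add_sum_erase _ w (Finset.mem_univ i)]
  simp only [if_true, zero_add, add_sub_cancel_left]
  apply Finset.sum_congr rfl
  intro x hx
  rw [if_neg]
  exact (Finset.ne_of_mem_erase hx).symm

lemma pd_sig {N : ℕ} (i : Fin N) : pderiv i (sig N 1) = 1 := by
  unfold sig
  simp [pderiv_X, Pi.single_apply]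

lemma pd_tpow {N : ℕ} (i : Fin N) (k : ℕ) :
    X i * pderiv i (tauTop N ^ k) = (k : MvP N) * tauTop N ^ k := by
  induction k with
  | zero => simp
  | succ k ih =>
    rw [pow_succ, pderiv_mul]
    push_cast
    linear_combination tauTop N * ih + tauTop N ^ k * pd_t i

lemma pd2_tpow {N : ℕ} (i : Fin N) (k : ℕ) :
    X i ^ 2 * pderiv i (pderiv i (tauTop N ^ k)) = (k : MvP N) * ((k : MvP N) - 1) * tauTop N ^ k := by
  have h := congrArg (pderiv i) (pd_tpow (N := N) i k)
  rw [pderiv_mul, pderiv_mul, pderiv_X_self] at h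
  have h0 : pderiv i ((k : MvP N)) = 0 := by
    rw [← map_natCast (C : ℂ →+* MvP N), pderiv_C]
  rw [h0] at h
  linear_combination X i * h + ((k : MvP N) - 1) * pd_tpow (N := N) i k

lemma hom_sig (N : ℕ) : (sig N 1).IsHomogeneous 1 := by
  unfold sig
  apply IsHomogeneous.sum
  intro i _
  simpa using isHomogeneous_X ℂ i

lemma hom_w {N : ℕ} (j : Fin N) : (w j).IsHomogeneous (N - 1) := by
  unfold w
  have := IsHomogeneous.prod (Finset.univ.erase j) (fun i => (X i : MvP N)) (fun _ => 1)
    (fun i _ => isHomogeneous_X ℂ i)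
  simpa using this

lemma hom_u (N : ℕ) : (tauSub N).IsHomogeneous (N - 1) := by
  rw [tauSub_eq]
  exact IsHomogeneous.sum _ _ _ (fun i _ => hom_w i)

lemma hom_t (N : ℕ) : (tauTop N).IsHomogeneous N := by
  unfold tauTop
  have := IsHomogeneous.prod (Finset.univ) (fun i => (X i : MvP N)) (fun _ => 1)
    (fun i _ => isHomogeneous_X ℂ i)
  simpa using this

lemma swap_sig {N : ℕ} (e : Equiv.Perm (Fin N)) : rename e (sig N 1) = sig N 1 := by
  unfold sig
  simp only [map_sum, map_pow, rename_X]
  exact Equiv.sum_comp e (fun i => (X i : MvP N) ^ 1)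

lemma swap_t {N : ℕ} (e : Equiv.Perm (Fin N)) : rename e (tauTop N) = tauTop N := by
  unfold tauTop
  simp only [map_prod, rename_X]
  exact Equiv.prod_comp e (fun i => (X i : MvP N))

lemma swap_w {N : ℕ} (e : Equiv.Perm (Fin N)) (j : Fin N) : rename e (w j) = w (e j) := by
  have h := congrArg (rename e) (X_mul_w j)
  rw [map_mul, rename_X, swap_t, ← X_mul_w (e j)] at h
  exact mul_left_cancel₀ (X_ne_zero _) h

lemma swap_u {N : ℕ} (e : Equiv.Perm (Fin N)) : rename e (tauSub N) = tauSub N := by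
  rw [tauSub_eq, map_sum]
  simp only [swap_w]
  exact Equiv.sum_comp e w

/-- first-order part plus exchange part, cleared denominators -/
def HasE {N : ℕ} [NeZero N] (f : MvP N) (e : Fin N → MvP N) : Prop :=
  ∀ i : Fin N, (X i - X (i + 1)) ^ 2 * e i =
    (X i - X (i + 1)) * (X i ^ 2 * pderiv i f - X (i + 1) ^ 2 * pderiv (i + 1) f)
    - X i * X (i + 1) * (f - rename (Equiv.swap i (i + 1)) f)

/-- first-order part on symmetric functions -/
def HasD {N : ℕ} [NeZero N] (f : MvP N) (e : Fin N → MvP N) : Prop :=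
  ∀ i : Fin N, (X i - X (i + 1)) * e i =
    (X i ^ 2 * pderiv i f - X (i + 1) ^ 2 * pderiv (i + 1) f)
    ∧ rename (Equiv.swap i (i + 1)) f = f

section
set_option linter.unusedSectionVars false
variable {N : ℕ} [NeZero N]

lemma HasE.mul {p g : MvP N} {e r : Fin N → MvP N} (hp : HasE p e) (hg : HasD g r) :
    HasE (p * g) (fun i => p * r i + e i * g) := by
  intro i
  obtain ⟨h1, h2⟩ := hg i
  have h3 := hp i
  simp only [map_mul, pderiv_mul, h2]
  linear_combination (X i - X (i + 1)) * p * h1 + g * h3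

lemma D_sig : HasD (sig N 1) (fun i => X i + X (i + 1)) := by
  intro i
  refine ⟨?_, swap_sig _⟩
  rw [pd_sig, pd_sig]; ring

lemma D_tpow (k : ℕ) : HasD (tauTop N ^ k) (fun _ => (k : MvP N) * tauTop N ^ k) := by
  intro i
  refine ⟨?_, by rw [map_pow, swap_t]⟩
  linear_combination - X i * pd_tpow i k + X (i + 1) * pd_tpow (i + 1) k

lemma D_u : HasD (tauSub N) (fun _ => tauSub N) := by
  intro i
  refine ⟨?_, swap_u _⟩
  linear_combination - X i * pd_u i + X (i + 1) * pd_u (i + 1) + X_mul_w i - X_mul_w (i + 1)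

lemma E_one : HasE (1 : MvP N) (fun _ => 0) := by
  intro i
  simp

lemma ne_succ (hN : 3 ≤ N) (i : Fin N) : i ≠ i + 1 := by
  intro h
  have h1 : (1 : Fin N) = 0 := by simpa using h.symm
  rw [Fin.one_eq_zero_iff] at h1
  omega

lemma E_X (hN : 3 ≤ N) (j : Fin N) :
    HasE (X j : MvP N) (fun i => (if i = j then X j else 0) + if i + 1 = j then X j else 0) := by
  intro i
  have hne := ne_succ hN i
  rw [rename_X]
  simp only [pderiv_X, Pi.single_apply]
  by_cases h1 : i = j
  · subst h1
    simp only [Equiv.swap_apply_left, if_true, if_neg hne, if_neg hne.symm]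
    ring
  · by_cases h2 : i + 1 = j
    · subst h2
      simp only [Equiv.swap_apply_right, if_true, if_neg hne, if_neg hne.symm]
      ring
    · rw [Equiv.swap_apply_of_ne_of_ne (Ne.symm h1) (Ne.symm h2)]
      simp only [if_neg h1, if_neg h2, if_neg (Ne.symm h1), if_neg (Ne.symm h2)]
      ring

lemma E_w (hN : 3 ≤ N) (j : Fin N) : HasE (w j : MvP N) (fun _ => w j) := by
  intro i
  have hne := ne_succ hN i
  rw [swap_w]
  have a1 := pd_w i j
  have a2 := pd_w (i + 1) j
  have b1 := X_mul_w i
  have b2 := X_mul_w (i + 1)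
  by_cases h1 : i = j
  · subst h1
    rw [if_pos rfl] at a1
    rw [if_neg hne.symm] at a2
    rw [Equiv.swap_apply_left]
    linear_combination (X i - X (i + 1)) * (- X i * a1 + X (i + 1) * a2) - X i * b2 + X i * b1
  · by_cases h2 : i + 1 = j
    · subst h2
      rw [if_neg hne] at a1
      rw [if_pos rfl] at a2
      rw [Equiv.swap_apply_right]
      linear_combination (X i - X (i + 1)) * (- X i * a1 + X (i + 1) * a2)
        - X (i + 1) * b1 + X (i + 1) * b2
    · rw [Equiv.swap_apply_of_ne_of_ne (Ne.symm h1) (Ne.symm h2)]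
      rw [if_neg h1] at a1
      rw [if_neg h2] at a2
      linear_combination (X i - X (i + 1)) * (- X i * a1 + X (i + 1) * a2)

/-- second-order part -/
def L (f : MvP N) : MvP N := ∑ i : Fin N, X i ^ 2 * pderiv i (pderiv i f)

lemma T2op_eq (hN : 3 ≤ N) (a : ℝ) {f : MvP N} {e : Fin N → MvP N} (h : HasE f e) :
    T2op N a f = phi N (L f + C ((2 * a : ℝ) : ℂ) * ∑ i, e i) := by
  unfold T2op L
  rw [map_add, map_sum, map_mul, map_sum, add_sub_assoc, ← mul_sub, ← Finset.sum_sub_distrib]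
  congr 2
  apply Finset.sum_congr rfl
  intro i _
  have hx : phi N (X i - X (i + 1)) ≠ 0 := by
    unfold phi
    rw [Ne, IsFractionRing.to_map_eq_zero_iff, sub_eq_zero]
    exact fun hh => ne_succ hN i (X_injective hh)
  have h1 := congrArg (phi N) (h i)
  rw [map_mul, map_sub (phi N) (_ * _), map_mul, map_mul (phi N) (X i * X (i + 1)), map_pow] at h1
  field_simp
  linear_combination - h1

lemma L_mul (p g : MvP N) : L (p * g) = p * L g + g * L p
    + 2 * ∑ i : Fin N, (X i * pderiv i p) * (X i * pderiv i g) := by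
  unfold L
  simp only [Finset.mul_sum, ← Finset.sum_add_distrib]
  apply Finset.sum_congr rfl
  intro i _
  simp only [pderiv_mul, map_add]
  ring

lemma L_tpow (k : ℕ) : L (tauTop N ^ k) = (N : MvP N) * (k : MvP N) * ((k : MvP N) - 1) * tauTop N ^ k := by
  unfold L
  simp only [pd2_tpow]
  simp
  ring

lemma L_w (j : Fin N) : L (w j) = 0 := by
  unfold L
  apply Finset.sum_eq_zero
  intro i _
  have h := pd_w i j
  have h2 := congrArg (pderiv i) h
  rw [pderiv_mul, pderiv_X_self] at h2
  split_ifs at h h2 with hij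
  · simp only [map_zero] at h2
    linear_combination X i * h2 - h
  · linear_combination X i * h2

lemma L_add (p g : MvP N) : L (p + g) = L p + L g := by
  unfold L
  simp only [map_add, mul_add, Finset.sum_add_distrib]

lemma L_u : L (tauSub N) = 0 := by
  have : ∀ S : Finset (Fin N), L (∑ j ∈ S, w j) = 0 := by
    intro S
    classical
    induction S using Finset.induction_on with
    | empty => simp [L]
    | insert b S hb ih => rw [Finset.sum_insert hb, L_add, ih, L_w, add_zero]
  exact this _

lemma L_sig : L (sig N 1) = 0 := by
  unfold L
  simp [pd_sig]

lemma L_X (j : Fin N) : L (X j) = 0 := by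
  unfold L
  apply Finset.sum_eq_zero
  intro i _
  rw [pderiv_X, Pi.single_apply]
  split_ifs <;> simp

lemma core (hN : 3 ≤ N) (a : ℝ) (k m : ℕ) (α β γ : ℂ) {p : MvP N} {e : Fin N → MvP N}
    (hE : HasE p e) (hm : p.IsHomogeneous m) (hs : ∑ i, e i = C α * p)
    (hL : L p = C β * p + C γ * tauTop N) :
    T2op N a (p * tauTop N ^ k) = phi N
      (C (β + 2 * k * m + N * k * (k - 1) + 2 * a * (α + N * k)) * (p * tauTop N ^ k)
        + C γ * tauTop N ^ (k + 1)) := by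
  rw [T2op_eq hN a (hE.mul (D_tpow k)), L_mul, hL, L_tpow]
  simp only [pd_tpow, ← Finset.sum_mul, Finset.sum_add_distrib, hs]
  have he := hm.sum_X_mul_pderiv
  rw [he]
  congr 1
  have h2 : (C (2 : ℂ) : MvP N) = 2 := map_ofNat C 2
  simp [h2]
  ring

lemma sum_X_ind (j : Fin N) :
    ∑ i : Fin N, ((if i = j then X j else 0) + if i + 1 = j then X j else 0) = 2 * (X j : MvP N) := by
  rw [Finset.sum_add_distrib]
  have : ∀ i : Fin N, i + 1 = j ↔ i = j - 1 := fun i => eq_sub_iff_add_eq.symm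
  simp [this]
  ring

lemma T2op_add (a : ℝ) (f g : MvP N) : T2op N a (f + g) = T2op N a f + T2op N a g := by
  unfold T2op
  simp only [map_add, map_sub, mul_add, mul_sub, map_mul, Finset.sum_add_distrib,
    Finset.sum_sub_distrib]
  ring

lemma T2op_C (a : ℝ) (x : ℂ) (f : MvP N) : T2op N a (C x * f) = phi N (C x) * T2op N a f := by
  unfold T2op
  have h : ∀ i : Fin N, ∀ g : MvP N, pderiv i (C x * g) = C x * pderiv i g := fun i g => by
    rw [pderiv_mul, pderiv_C]; ring
  simp only [h, map_mul, map_sub, rename_C]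
  simp only [mul_sub, mul_add, Finset.mul_sum]
  refine congrArg₂ _ (congrArg₂ _ ?_ ?_) ?_
  all_goals
    apply Finset.sum_congr rfl
    intro i _
    ring

lemma T2op_zero (a : ℝ) : T2op N a (0 : MvP N) = 0 := by
  have := T2op_C (N := N) a 0 0
  simpa using this

lemma T2op_sum {ι : Type*} (a : ℝ) (S : Finset ι) (f : ι → MvP N) :
    T2op N a (∑ i ∈ S, f i) = ∑ i ∈ S, T2op N a (f i) := by
  classical
  induction S using Finset.induction_on with
  | empty => simp [T2op_zero]
  | insert b S hb ih => rw [Finset.sum_insert hb, Finset.sum_insert hb, T2op_add, ih]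

variable {d : ℕ}

/-- the spin polynomial `∑ i, P i |s_i⟩` -/
def vec (s : SpinV N d) : (Fin N → MvP N) →ₗ[ℂ] SpinPoly N d where
  toFun P := fun c => ∑ i, C (sComp s i c) * P i
  map_add' P Q := by
    funext c
    simp [mul_add, Finset.sum_add_distrib]
  map_smul' x P := by
    funext c
    simp [Finset.smul_sum]

lemma vec_apply (s : SpinV N d) (P : Fin N → MvP N) (c) :
    vec s P c = ∑ i, C (sComp s i c) * P i := rfl

/-- elements whose image stays in the space -/
def good (a : ℝ) (n : ℕ) : Submodule ℂ (SpinPoly N d) where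
  carrier := {Φ | ∃ Φ' ∈ T2space N d n, ∀ c : Fin N → Fin d, phi N (Φ' c) = T2op N a (Φ c)}
  zero_mem' := ⟨0, Submodule.zero_mem _, fun c => by simp [T2op_zero]⟩
  add_mem' := by
    rintro f g ⟨f', hf, hf'⟩ ⟨g', hg, hg'⟩
    exact ⟨f' + g', Submodule.add_mem _ hf hg, fun c => by simp [T2op_add, hf', hg']⟩
  smul_mem' := by
    rintro x f ⟨f', hf, hf'⟩
    exact ⟨x • f', Submodule.smul_mem _ x hf, fun c => by
      simp only [Pi.smul_apply, smul_eq_C_mul, T2op_C, map_mul, hf']⟩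

lemma vecF (s : SpinV N d) (g : MvP N) : vec s (fun _ => g) = fun c => C (Lam s c) * g := by
  funext c
  rw [vec_apply, ← Finset.sum_mul, Lam, Finset.sum_apply, map_sum]

lemma memF (n : ℕ) (s : SpinV N d) (α β k : ℕ) (hα : α ≤ 1) (hβ : β ≤ 1)
    (h : α + (N - 1) * β + N * k ≤ n) :
    vec s (fun _ => sig N 1 ^ α * tauSub N ^ β * tauTop N ^ k) ∈ T2space N d n := by
  apply Submodule.subset_span
  left; left
  have e : (aeval ![sig N 1, tauSub N, tauTop N] (X 0 ^ α * X 1 ^ β * X 2 ^ k : MvPolynomial (Fin 3) ℂ))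
      = sig N 1 ^ α * tauSub N ^ β * tauTop N ^ k := by simp
  refine ⟨s, X 0 ^ α * X 1 ^ β * X 2 ^ k, ?_, ?_, ?_, ?_⟩
  · refine (degreeOf_mul_le _ _ _).trans ?_
    have h1 := degreeOf_mul_le (0 : Fin 3) (X 0 ^ α : MvPolynomial (Fin 3) ℂ) (X 1 ^ β)
    have h2 := degreeOf_pow_le (0 : Fin 3) (X 0 : MvPolynomial (Fin 3) ℂ) α
    have h3 := degreeOf_pow_le (0 : Fin 3) (X 1 : MvPolynomial (Fin 3) ℂ) β
    have h4 := degreeOf_pow_le (0 : Fin 3) (X 2 : MvPolynomial (Fin 3) ℂ) k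
    simp only [degreeOf_X, if_true, mul_one, Fin.reduceEq, zero_ne_one, one_ne_zero, if_false, mul_zero] at h2 h3 h4
    omega
  · refine (degreeOf_mul_le _ _ _).trans ?_
    have h1 := degreeOf_mul_le (1 : Fin 3) (X 0 ^ α : MvPolynomial (Fin 3) ℂ) (X 1 ^ β)
    have h2 := degreeOf_pow_le (1 : Fin 3) (X 0 : MvPolynomial (Fin 3) ℂ) α
    have h3 := degreeOf_pow_le (1 : Fin 3) (X 1 : MvPolynomial (Fin 3) ℂ) β
    have h4 := degreeOf_pow_le (1 : Fin 3) (X 2 : MvPolynomial (Fin 3) ℂ) k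
    simp only [degreeOf_X, if_true, mul_one, Fin.reduceEq, zero_ne_one, one_ne_zero, if_false, mul_zero] at h2 h3 h4
    omega
  · rw [e]
    refine (IsHomogeneous.totalDegree_le
      ((((hom_sig N).pow α).mul ((hom_u N).pow β)).mul ((hom_t N).pow k))).trans ?_
    simpa using h
  · rw [e, vecF]

lemma memG (n : ℕ) (s : SpinV N d) (β k : ℕ) (hβ : β ≤ 1)
    (h : (N - 1) * β + N * k + 1 ≤ n) :
    vec s (fun i => X i * tauSub N ^ β * tauTop N ^ k) ∈ T2space N d n := by
  apply Submodule.subset_span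
  left; right
  have e : (aeval ![tauSub N, tauTop N] (X 0 ^ β * X 1 ^ k : MvPolynomial (Fin 2) ℂ))
      = tauSub N ^ β * tauTop N ^ k := by simp
  refine ⟨s, X 0 ^ β * X 1 ^ k, ?_, ?_, ?_⟩
  · refine (degreeOf_mul_le _ _ _).trans ?_
    have h2 := degreeOf_pow_le (0 : Fin 2) (X 0 : MvPolynomial (Fin 2) ℂ) β
    have h3 := degreeOf_pow_le (0 : Fin 2) (X 1 : MvPolynomial (Fin 2) ℂ) k
    simp only [degreeOf_X, if_true, mul_one, Fin.reduceEq, zero_ne_one, one_ne_zero, if_false, mul_zero] at h2 h3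
    omega
  · rw [e]
    refine le_trans (Nat.add_le_add_right (IsHomogeneous.totalDegree_le
      (((hom_u N).pow β).mul ((hom_t N).pow k))) 1) ?_
    simpa using h
  · funext c
    rw [e, vec_apply]
    simp only [mul_assoc]

lemma memQ (n : ℕ) (s : SpinV N d) (α k : ℕ) (hα : α ≤ 1)
    (h : α + N * k + (N - 1) ≤ n) :
    vec s (fun i => w i * sig N 1 ^ α * tauTop N ^ k) ∈ T2space N d n := by
  apply Submodule.subset_span
  right
  have e : (aeval ![sig N 1, tauTop N] (X 0 ^ α * X 1 ^ k : MvPolynomial (Fin 2) ℂ))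
      = sig N 1 ^ α * tauTop N ^ k := by simp
  refine ⟨s, X 0 ^ α * X 1 ^ k, ?_, ?_, ?_⟩
  · refine (degreeOf_mul_le _ _ _).trans ?_
    have h2 := degreeOf_pow_le (0 : Fin 2) (X 0 : MvPolynomial (Fin 2) ℂ) α
    have h3 := degreeOf_pow_le (0 : Fin 2) (X 1 : MvPolynomial (Fin 2) ℂ) k
    simp only [degreeOf_X, if_true, mul_one, Fin.reduceEq, zero_ne_one, one_ne_zero, if_false, mul_zero] at h2 h3
    omega
  · rw [e]
    refine le_trans (Nat.add_le_add_right (IsHomogeneous.totalDegree_le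
      (((hom_sig N).pow α).mul ((hom_t N).pow k))) (N - 1)) ?_
    simpa using h
  · funext c
    rw [e, vec_apply]
    simp only [mul_assoc, w]

lemma good_core (hN : 3 ≤ N) (a : ℝ) (n k m : ℕ) (α β γ : ℂ) (s : SpinV N d)
    (p : Fin N → MvP N) (e : Fin N → Fin N → MvP N)
    (hE : ∀ j, HasE (p j) (e j)) (hm : ∀ j, (p j).IsHomogeneous m)
    (hs : ∀ j, ∑ i, e j i = C α * p j)
    (hL : ∀ j, L (p j) = C β * p j + C γ * tauTop N)
    (hγ : γ = 0 ∨ N ≤ m) (hn : m + N * k ≤ n)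
    (hmem : vec s (fun j => p j * tauTop N ^ k) ∈ T2space N d n) :
    vec s (fun j => p j * tauTop N ^ k) ∈ good (N := N) (d := d) a n := by
  have hc := fun j => core hN a k m α β γ (hE j) (hm j) (hs j) (hL j)
  set c1 : ℂ := β + 2 * k * m + N * k * (k - 1) + 2 * a * (α + N * k) with hc1
  refine ⟨c1 • vec s (fun j => p j * tauTop N ^ k) + γ • vec s (fun _ => tauTop N ^ (k + 1)),
    Submodule.add_mem _ (Submodule.smul_mem _ _ hmem) ?_, ?_⟩
  · rcases hγ with h | h
    · rw [h, zero_smul]; exact Submodule.zero_mem _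
    · apply Submodule.smul_mem
      have := memF n s 0 0 (k + 1) (by simp) (by simp) (by
        rw [mul_add]; omega)
      simpa using this
  · intro c
    rw [← map_smul, ← map_smul, ← map_add, vec_apply, vec_apply, T2op_sum, map_sum]
    apply Finset.sum_congr rfl
    intro j _
    rw [T2op_C, hc, map_mul]
    simp only [Pi.add_apply, Pi.smul_apply, smul_eq_C_mul]

lemma decomp {r : ℕ} (v : Fin r → MvP N) (wt : Fin r → ℕ) (hv : ∀ i, (v i).IsHomogeneous (wt i))
    (F : MvPolynomial (Fin r) ℂ) (n : ℕ) (h : (aeval v F : MvP N).totalDegree ≤ n) :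
    aeval v F = ∑ m ∈ F.support with ∑ i, wt i * m i ≤ n, F.coeff m • ∏ i, v i ^ m i := by
  have h1 : aeval v F = ∑ m ∈ F.support, F.coeff m • ∏ i, v i ^ m i := by
    rw [aeval_def, eval₂_eq']
    simp only [Algebra.smul_def]
  have hh : ∀ m : Fin r →₀ ℕ, (F.coeff m • ∏ i, v i ^ m i).IsHomogeneous (∑ i, wt i * m i) := by
    intro m
    rw [smul_eq_C_mul]
    exact (IsHomogeneous.prod _ _ _ (fun i _ => (hv i).pow (m i))).C_mul _
  have h2 : aeval v F = ∑ k ∈ Finset.range (n + 1), homogeneousComponent k (aeval v F) := by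
    conv_lhs => rw [← sum_homogeneousComponent (aeval v F)]
    apply Finset.sum_subset
    · intro x hx
      simp only [Finset.mem_range] at *
      omega
    · intro x _ hx
      apply homogeneousComponent_eq_zero
      simp only [Finset.mem_range] at *
      omega
  rw [h2, h1, Finset.sum_filter]
  simp only [map_sum]
  rw [Finset.sum_comm]
  apply Finset.sum_congr rfl
  intro m _
  simp only [homogeneousComponent_of_mem (hh m)]
  rw [Finset.sum_ite_eq']
  simp only [Finset.mem_range, Nat.lt_succ_iff]

lemma two_C : (C (2 : ℂ) : MvP N) = 2 := map_ofNat C 2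

lemma sum_D_sig : ∑ i : Fin N, ((X i : MvP N) + X (i + 1)) = 2 * sig N 1 := by
  have h := Equiv.sum_comp (Equiv.addRight (1 : Fin N)) (fun i => (X i : MvP N))
  simp only [Equiv.coe_addRight] at h
  rw [Finset.sum_add_distrib, h]
  simp [sig]
  ring

lemma goodF (hN : 3 ≤ N) (a : ℝ) (n : ℕ) (s : SpinV N d) (α β k : ℕ) (hα : α ≤ 1) (hβ : β ≤ 1)
    (h : α + (N - 1) * β + N * k ≤ n) :
    vec s (fun _ => sig N 1 ^ α * tauSub N ^ β * tauTop N ^ k) ∈ good (N := N) (d := d) a n := by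
  have hmem := memF n s α β k hα hβ h
  have hs := E_one.mul (D_sig (N := N))
  have hu := E_one.mul (D_u (N := N))
  have hsu := hs.mul (D_u (N := N))
  simp only [one_mul, zero_mul, add_zero] at hs hu hsu
  interval_cases α <;> interval_cases β
  · refine good_core hN a n k 0 0 0 0 s _ (fun _ _ => 0) (fun j => ?_) (fun j => ?_)
      (fun j => ?_) (fun j => ?_) (Or.inl rfl) (by simpa using h) hmem
    · simpa using E_one
    · simpa using isHomogeneous_one _ _
    · simp
    · simp [L]
  · refine good_core hN a n k (N - 1) N 0 0 s _ (fun _ _ => tauSub N) (fun j => ?_) (fun j => ?_)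
      (fun j => ?_) (fun j => ?_) (Or.inl rfl) (by simpa using h) hmem
    · simpa using hu
    · simpa using hom_u N
    · simp
    · simp [L_u]
  · refine good_core hN a n k 1 2 0 0 s _ (fun _ i => X i + X (i + 1)) (fun j => ?_)
      (fun j => ?_) (fun j => ?_) (fun j => ?_) (Or.inl rfl) (by simpa using h) hmem
    · simpa using hs
    · simpa using hom_sig N
    · simp [sum_D_sig, two_C]
    · simp [L_sig]
  · refine good_core hN a n k N (N + 2) 2 (-2 * N) s _
      (fun _ i => sig N 1 * tauSub N + (X i + X (i + 1)) * tauSub N) (fun j => ?_)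
      (fun j => ?_) (fun j => ?_) (fun j => ?_) (Or.inr le_rfl) (by omega) hmem
    · simpa using hsu
    · have := (hom_sig N).mul (hom_u N)
      rw [show 1 + (N - 1) = N by omega] at this
      simpa using this
    · simp only [← add_mul]
      rw [← Finset.sum_mul, Finset.sum_add_distrib, sum_D_sig]
      simp [two_C]
      ring
    · simp only [pow_one]
      rw [L_mul, L_u, L_sig]
      simp only [pd_sig, pd_u, mul_one, mul_sub, Finset.sum_sub_distrib, X_mul_w,
        ← Finset.sum_mul]
      simp [two_C, sig]
      ring

lemma goodG (hN : 3 ≤ N) (a : ℝ) (n : ℕ) (s : SpinV N d) (β k : ℕ) (hβ : β ≤ 1)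
    (h : (N - 1) * β + N * k + 1 ≤ n) :
    vec s (fun i => X i * tauSub N ^ β * tauTop N ^ k) ∈ good (N := N) (d := d) a n := by
  have hmem := memG n s β k hβ h
  interval_cases β
  · refine good_core hN a n k 1 2 0 0 s _ (fun j i => (if i = j then X j else 0) + if i + 1 = j then X j else 0)
      (fun j => ?_)
      (fun j => ?_) (fun j => ?_) (fun j => ?_) (Or.inl rfl) (by omega) hmem
    · simpa using E_X hN j
    · simpa using isHomogeneous_X ℂ j
    · rw [sum_X_ind]; simp [two_C]
    · simp [L_X]
  · refine good_core hN a n k N (N + 2) 2 (-2) s _ (fun j i => X j * tauSub N +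
        ((if i = j then X j else 0) + if i + 1 = j then X j else 0) * tauSub N) (fun j => ?_)
      (fun j => ?_) (fun j => ?_) (fun j => ?_) (Or.inr le_rfl) (by omega) hmem
    · simpa using (E_X hN j).mul D_u
    · have := (isHomogeneous_X ℂ j).mul (hom_u N)
      rw [show 1 + (N - 1) = N by omega] at this
      simpa using this
    · simp only [← add_mul]
      rw [← Finset.sum_mul, Finset.sum_add_distrib, sum_X_ind]
      simp [two_C]
      ring
    · simp only [pow_one]
      rw [L_mul, L_u, L_X]
      have : ∑ i : Fin N, (X i * pderiv i (X j)) * (X i * pderiv i (tauSub N))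
          = X j * tauSub N - tauTop N := by
        rw [Finset.sum_eq_single j]
        · rw [pd_u, pderiv_X_self, ← X_mul_w j]; ring
        · intro b _ hb
          rw [pderiv_X_of_ne hb.symm]; ring
        · simp
      rw [this]
      simp [two_C]
      ring

lemma goodQ (hN : 3 ≤ N) (a : ℝ) (n : ℕ) (s : SpinV N d) (α k : ℕ) (hα : α ≤ 1)
    (h : α + N * k + (N - 1) ≤ n) :
    vec s (fun i => w i * sig N 1 ^ α * tauTop N ^ k) ∈ good (N := N) (d := d) a n := by
  have hmem := memQ n s α k hα h
  interval_cases α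
  · refine good_core hN a n k (N - 1) N 0 0 s _ (fun j _ => w j) (fun j => ?_)
      (fun j => ?_) (fun j => ?_) (fun j => ?_) (Or.inl rfl) (by omega) hmem
    · simpa using E_w hN j
    · simpa using hom_w j
    · simp
    · simp [L_w]
  · refine good_core hN a n k N (N + 2) 2 (-2) s _
      (fun j i => w j * (X i + X (i + 1)) + w j * sig N 1) (fun j => ?_)
      (fun j => ?_) (fun j => ?_) (fun j => ?_) (Or.inr le_rfl) (by omega) hmem
    · simpa using (E_w hN j).mul D_sig
    · have := (hom_w j).mul (hom_sig N)
      rw [show N - 1 + 1 = N by omega] at this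
      simpa using this
    · rw [Finset.sum_add_distrib, ← Finset.mul_sum, sum_D_sig]
      simp [two_C]
      ring
    · simp only [pow_one]
      rw [L_mul, L_w, L_sig]
      have : ∑ i : Fin N, (X i * pderiv i (w j)) * (X i * pderiv i (sig N 1))
          = w j * sig N 1 - tauTop N := by
        simp only [pd_w, pd_sig, mul_one]
        have h1 : ∀ i : Fin N, (if i = j then 0 else w j) * X i
            = w j * X i - if i = j then w j * X j else 0 := by
          intro i
          split_ifs with hij
          · rw [hij]; ring
          · ring
        simp only [h1, Finset.sum_sub_distrib]
        rw [← X_mul_w j]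
        simp [sig, Finset.mul_sum]
        ring
      rw [this]
      simp [two_C]
      ring

lemma le_one_of_degreeOf {r : ℕ} {F : MvPolynomial (Fin r) ℂ} {i : Fin r} (h : F.degreeOf i ≤ 1)
    {m : Fin r →₀ ℕ} (hm : m ∈ F.support) : m i ≤ 1 :=
  (degreeOf_le_iff.mp h) m hm

end
end T2Aux

open T2Aux
theorem stmt_7 (N d : ℕ) [NeZero N] (hN : 3 ≤ N) (hd : 1 ≤ d) (a : ℝ) (n : ℕ)
    (Φ : SpinPoly N d) (hΦ : Φ ∈ T2space N d n) :
    ∃ Φ' ∈ T2space N d n, ∀ c : Fin N → Fin d, phi N (Φ' c) = T2op N a (Φ c) := by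
  have key : T2space N d n ≤ good (N := N) (d := d) a n := by
    apply Submodule.span_le.mpr
    rintro Ψ ((⟨s, F, h0, h1, hd', rfl⟩ | ⟨s, G, h0, hd', rfl⟩) | ⟨s, Q, h0, hd', rfl⟩)
    · have hdec := decomp ![sig N 1, tauSub N, tauTop N] ![1, N - 1, N] (by
        intro i
        fin_cases i
        · exact hom_sig N
        · exact hom_u N
        · exact hom_t N) F n hd'
      rw [← vecF]
      have : (fun _ : Fin N => aeval ![sig N 1, tauSub N, tauTop N] F)
          = ∑ m ∈ F.support with ∑ i, ![1, N - 1, N] i * m i ≤ n, F.coeff m •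
            (fun _ : Fin N => sig N 1 ^ m 0 * tauSub N ^ m 1 * tauTop N ^ m 2) := by
        funext j
        rw [hdec]
        simp [Fin.prod_univ_three]
      rw [this, map_sum]
      refine Submodule.sum_mem _ (fun m hm => ?_)
      rw [map_smul]
      rw [Finset.mem_filter] at hm
      refine Submodule.smul_mem _ _ (goodF hN a n s _ _ _ (le_one_of_degreeOf h0 hm.1)
        (le_one_of_degreeOf h1 hm.1) ?_)
      simpa [Fin.sum_univ_three] using hm.2
    · have hdec := decomp ![tauSub N, tauTop N] ![N - 1, N] (by
        intro i
        fin_cases i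
        · exact hom_u N
        · exact hom_t N) G (n - 1) (by omega)
      have : (fun c : Fin N → Fin d => ∑ i : Fin N, C (sComp s i c) *
            (X i * aeval ![tauSub N, tauTop N] G))
          = vec s (∑ m ∈ G.support with ∑ i, ![N - 1, N] i * m i ≤ n - 1, G.coeff m •
            (fun i : Fin N => X i * tauSub N ^ m 0 * tauTop N ^ m 1)) := by
        funext c
        rw [hdec, vec_apply]
        refine Finset.sum_congr rfl (fun j _ => ?_)
        simp [Fin.prod_univ_two, Finset.mul_sum, mul_assoc]
      rw [this, map_sum]
      refine Submodule.sum_mem _ (fun m hm => ?_)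
      rw [map_smul]
      rw [Finset.mem_filter] at hm
      refine Submodule.smul_mem _ _ (goodG hN a n s _ _ (le_one_of_degreeOf h0 hm.1) ?_)
      have := hm.2
      simp only [Fin.sum_univ_two, Matrix.cons_val_zero, Matrix.cons_val_one] at this
      omega
    · have hdec := decomp ![sig N 1, tauTop N] ![1, N] (by
        intro i
        fin_cases i
        · exact hom_sig N
        · exact hom_t N) Q (n - (N - 1)) (by omega)
      have : (fun c : Fin N → Fin d => ∑ i : Fin N, C (sComp s i c) *
            ((∏ j ∈ Finset.univ.erase i, X j) * aeval ![sig N 1, tauTop N] Q))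
          = vec s (∑ m ∈ Q.support with ∑ i, ![1, N] i * m i ≤ n - (N - 1), Q.coeff m •
            (fun i : Fin N => w i * sig N 1 ^ m 0 * tauTop N ^ m 1)) := by
        funext c
        rw [hdec, vec_apply]
        refine Finset.sum_congr rfl (fun j _ => ?_)
        simp [Fin.prod_univ_two, Finset.mul_sum, mul_assoc, w]
      rw [this, map_sum]
      refine Submodule.sum_mem _ (fun m hm => ?_)
      rw [map_smul]
      rw [Finset.mem_filter] at hm
      refine Submodule.smul_mem _ _ (goodQ hN a n s _ _ (le_one_of_degreeOf h0 hm.1) ?_)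
      have := hm.2
      simp only [Fin.sum_univ_two, Matrix.cons_val_zero, Matrix.cons_val_one] at this
      omega
  exact key hΦ
end
end
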